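/- arXiv:2509.20259 — 3 statements merged into one kernel-verified Lean document; each statement's English description precedes it below -/
import Mathlib

section
/- For every ε > 0 there exists a constant C_ε > 0 such that for all positive integers h and N with 1 ≤ h ≤ 2N², one has |Σ_{r | h, r ≤ N} Σ_{x,y} N·(x + y − N/r)/(x·y) − (2/ζ(2) − 1)·N²·(Σ_{r | h} 1/r)| ≤ C_ε · N^{1+ε}, where the inner sum is over pairs of coprime positive integers x, y with x ≤ N/r, y ≤ N/r and x + y > N/r, and the outer sum runs over positive divisors r of h with r ≤ N. -/
open Finset in
lemma aux_tot (n : ℕ) (hn : 0 < n) :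
    ∑ d ∈ n.divisors, ((ArithmeticFunction.moebius d : ℤ) : ℝ) / d = (Nat.totient n : ℝ) / n := by
  have h := (ArithmeticFunction.sum_eq_iff_sum_mul_moebius_eq (R := ℝ) (f := fun n => (Nat.totient n : ℝ))
    (g := fun n => (n : ℝ))).1 (fun n hn => by exact_mod_cast Nat.sum_totient n) n hn
  have hn' : (n : ℝ) ≠ 0 := by positivity
  rw [eq_div_iff hn', ← h, Finset.sum_mul,
    Nat.sum_divisorsAntidiagonal (f := fun a b => ((ArithmeticFunction.moebius a : ℤ) : ℝ) * (b : ℝ))]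
  refine Finset.sum_congr rfl fun d hd => ?_
  have hd' := Nat.dvd_of_mem_divisors hd
  have hd0 : (d : ℝ) ≠ 0 := by
    have := Nat.pos_of_mem_divisors hd
    positivity
  rw [Nat.cast_div hd' hd0]
  ring

lemma aux_hasSum : HasSum (fun n : ℕ => ((ArithmeticFunction.moebius n : ℤ) : ℝ) / (n : ℝ) ^ 2)
    (1 / (Real.pi ^ 2 / 6)) := by
  have h2 : 1 < (2 : ℂ).re := by norm_num
  have hs := (ArithmeticFunction.LSeriesSummable_moebius_iff.mpr h2).LSeriesHasSum
  have he := LSeries_one_mul_Lseries_moebius h2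
  rw [LSeries_one_eq_riemannZeta h2, riemannZeta_two] at he
  have hpi : (Real.pi : ℂ) ≠ 0 := by exact_mod_cast Real.pi_ne_zero
  replace he := eq_one_div_of_mul_eq_one_right he
  rw [he] at hs
  unfold LSeriesHasSum at hs
  rw [← Complex.hasSum_ofReal]
  push_cast
  convert hs using 2 with n
  rcases eq_or_ne n 0 with rfl | hn
  · simp
  · rw [LSeries.term_of_ne_zero hn]
    norm_cast

lemma aux_tail (M : ℕ) :
    |(1 / (Real.pi ^ 2 / 6)) - ∑ n ∈ Finset.range (M + 1),
      ((ArithmeticFunction.moebius n : ℤ) : ℝ) / (n : ℝ) ^ 2| ≤ 2 / ((M : ℝ) + 1) := by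
  have ht := (aux_hasSum.tendsto_sum_nat.sub_const (∑ n ∈ Finset.range (M + 1),
      ((ArithmeticFunction.moebius n : ℤ) : ℝ) / (n : ℝ) ^ 2)).abs
  refine le_of_tendsto ht ?_
  filter_upwards [Filter.eventually_ge_atTop (M + 1)] with n hn
  rw [← Finset.sum_Ico_eq_sub _ hn]
  refine (Finset.abs_sum_le_sum_abs _ _).trans ?_
  refine le_trans ?_ (sum_Ioo_inv_sq_le (α := ℝ) M n)
  have : Finset.Ico (M + 1) n = Finset.Ioo M n := by ext; simp only [Finset.mem_Ico, Finset.mem_Ioo]; omega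
  rw [this]
  refine Finset.sum_le_sum fun d _ => ?_
  rw [abs_div, abs_of_nonneg (by positivity : (0:ℝ) ≤ (d:ℝ)^2), div_eq_mul_inv]
  have : |((ArithmeticFunction.moebius d : ℤ) : ℝ)| ≤ 1 := by
    exact_mod_cast ArithmeticFunction.abs_moebius_le_one
  exact mul_le_of_le_one_left (by positivity) this

lemma aux_phi (M : ℕ) :
    |∑ x ∈ Finset.Icc 1 M, (Nat.totient x : ℝ) / x - M * (1 / (Real.pi ^ 2 / 6))| ≤
      3 + Real.log M := by
  let f : ArithmeticFunction ℝ := ⟨fun n => ((ArithmeticFunction.moebius n : ℤ) : ℝ) / n, by simp⟩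
  have hf : ∀ n, f n = ((ArithmeticFunction.moebius n : ℤ) : ℝ) / n := fun n => rfl
  have h1 : ∑ x ∈ Finset.Icc 1 M, (Nat.totient x : ℝ) / x =
      ∑ d ∈ Finset.Icc 1 M, ((ArithmeticFunction.moebius d : ℤ) : ℝ) / d * ((M / d : ℕ) : ℝ) := by
    have := ArithmeticFunction.sum_Ioc_mul_zeta_eq_sum f M
    have hI : Finset.Ioc 0 M = Finset.Icc 1 M := by ext; simp; omega
    rw [hI] at this
    simp only [hf] at this
    rw [← this]
    refine Finset.sum_congr rfl fun x hx => ?_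
    rw [ArithmeticFunction.coe_mul_zeta_apply, ← aux_tot x (by simp at hx; omega)]
    rfl
  have h2 : ∑ n ∈ Finset.range (M + 1), ((ArithmeticFunction.moebius n : ℤ) : ℝ) / (n : ℝ) ^ 2
     = ∑ n ∈ Finset.Icc 1 M, ((ArithmeticFunction.moebius n : ℤ) : ℝ) / (n : ℝ) ^ 2 := by
    rw [Finset.range_eq_Ico, Finset.sum_eq_sum_Ico_succ_bot (by omega)]
    simp
    rfl
  have h3 := aux_tail M
  rw [h2] at h3
  set T := ∑ n ∈ Finset.Icc 1 M, ((ArithmeticFunction.moebius n : ℤ) : ℝ) / (n : ℝ) ^ 2 with hT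
  have h4 : |∑ x ∈ Finset.Icc 1 M, (Nat.totient x : ℝ) / x - M * T| ≤ 1 + Real.log M := by
    refine le_trans ?_ (harmonic_le_one_add_log M)
    rw [h1, hT, Finset.mul_sum, ← Finset.sum_sub_distrib, harmonic_eq_sum_Icc]
    push_cast
    refine (Finset.abs_sum_le_sum_abs _ _).trans (Finset.sum_le_sum fun d hd => ?_)
    have hd0 : (0:ℝ) < d := by simp at hd; exact_mod_cast hd.1
    have : ((ArithmeticFunction.moebius d : ℤ) : ℝ) / d * ((M / d : ℕ) : ℝ) -
      M * (((ArithmeticFunction.moebius d : ℤ) : ℝ) / (d : ℝ) ^ 2) =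
      ((ArithmeticFunction.moebius d : ℤ) : ℝ) * (((M / d : ℕ) : ℝ) - (M:ℝ) / d) * (d:ℝ)⁻¹ := by
      field_simp
    rw [this, abs_mul, abs_mul, abs_of_pos (inv_pos.2 hd0)]
    have hm : |((ArithmeticFunction.moebius d : ℤ) : ℝ)| ≤ 1 := by
      exact_mod_cast ArithmeticFunction.abs_moebius_le_one
    have hfl : |((M / d : ℕ) : ℝ) - (M:ℝ) / d| ≤ 1 := by
      rw [← Nat.floor_div_eq_div (K := ℝ)]
      have a1 := Nat.floor_le (show (0:ℝ) ≤ (M:ℝ)/d by positivity)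
      have a2 := Nat.lt_floor_add_one ((M:ℝ)/d)
      rw [abs_le]; constructor <;> linarith
    exact mul_le_of_le_one_left (by positivity) (mul_le_one₀ hm (abs_nonneg _) hfl)
  have h5 : |(M:ℝ) * (1 / (Real.pi ^ 2 / 6) - T)| ≤ 2 := by
    rw [abs_mul, abs_of_nonneg (by positivity : (0:ℝ) ≤ M)]
    calc (M:ℝ) * _ ≤ M * (2 / (M+1)) := by gcongr
      _ ≤ 2 := by
        rw [mul_div_assoc', div_le_iff₀ (by positivity)]; linarith
  rw [abs_le] at *
  constructor <;> linarith [h4.1, h4.2, h5.1, h5.2]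

lemma aux_farey (M : ℕ) (hM : 1 ≤ M) :
    ∑ x ∈ Finset.Icc 1 M, ∑ y ∈ Finset.Icc 1 M,
      (if M < x + y ∧ Nat.gcd x y = 1 then 1 / ((x:ℝ) * y) else 0) = 1 := by
  induction M, hM using Nat.le_induction with
  | base => simp
  | succ M hM ih =>
    let g : ℕ → ℝ := fun y => if Nat.gcd (M+1) y = 1 then 1 / ((M+1:ℝ) * y) else 0
    have hsplit : ∀ F : ℕ → ℝ, ∑ x ∈ Finset.Icc 1 (M+1), F x = ∑ x ∈ Finset.Icc 1 M, F x + F (M+1) :=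
      fun F => Finset.sum_Icc_succ_top (by omega) F
    rw [hsplit]
    simp_rw [hsplit]
    rw [Finset.sum_add_distrib]
    have e1 : ∑ x ∈ Finset.Icc 1 M, (if M + 1 < x + (M+1) ∧ Nat.gcd x (M+1) = 1 then
        1 / ((x:ℝ) * ((M+1 : ℕ):ℝ)) else 0) = ∑ x ∈ Finset.Icc 1 M, g x := by
      refine Finset.sum_congr rfl fun x hx => ?_
      simp at hx
      simp only [g]
      simp only [Nat.gcd_comm x]
      have : M + 1 < x + (M+1) := by omega
      simp only [this, true_and]
      push_cast
      rw [mul_comm (x:ℝ)]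
    have e2 : ∑ x ∈ Finset.Icc 1 M, (if M + 1 < (M+1) + x ∧ Nat.gcd (M+1) x = 1 then
        1 / (((M+1 : ℕ):ℝ) * (x:ℝ)) else 0) = ∑ x ∈ Finset.Icc 1 M, g x := by
      refine Finset.sum_congr rfl fun x hx => ?_
      simp at hx
      simp only [g]
      have : M + 1 < (M+1) + x := by omega
      simp only [this, true_and]
      push_cast
      rfl
    have e3 : (if M + 1 < (M+1) + (M+1) ∧ Nat.gcd (M+1) (M+1) = 1 then
        1 / (((M+1 : ℕ):ℝ) * ((M+1 : ℕ):ℝ)) else 0) = 0 := by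
      rw [if_neg]
      rw [Nat.gcd_self]; omega
    have e4 : ∑ x ∈ Finset.Icc 1 M, ∑ y ∈ Finset.Icc 1 M,
      (if M < x + y ∧ Nat.gcd x y = 1 then 1 / ((x:ℝ) * y) else 0) =
      ∑ x ∈ Finset.Icc 1 M, ∑ y ∈ Finset.Icc 1 M,
      (if M + 1 < x + y ∧ Nat.gcd x y = 1 then 1 / ((x:ℝ) * y) else 0) +
      ∑ x ∈ Finset.Icc 1 M, (g x + g (M + 1 - x)) := by
      rw [← Finset.sum_add_distrib]
      refine Finset.sum_congr rfl fun x hx => ?_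
      simp only [Finset.mem_Icc] at hx
      have : g x + g (M+1-x) = ∑ y ∈ Finset.Icc 1 M, if y = M + 1 - x then g x + g (M+1-x) else 0 := by
        rw [Finset.sum_ite_eq', if_pos]
        simp; omega
      rw [this, ← Finset.sum_add_distrib]
      refine Finset.sum_congr rfl fun y hy => ?_
      simp only [Finset.mem_Icc] at hy
      by_cases hxy : y = M + 1 - x
      · have hs : M + 1 = x + y := by omega
        have n1 : ¬ (M + 1 < x + y) := by omega
        have n2 : M < x + y := by omega
        have hsr : (M:ℝ) + 1 = x + y := by exact_mod_cast hs
        have hx0 : (0:ℝ) < x := by exact_mod_cast hx.1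
        have hy0 : (0:ℝ) < y := by exact_mod_cast hy.1
        simp only [g, n1, n2, true_and, false_and, if_true, if_false, hxy.symm, zero_add]
        rw [hsr, hs]
        have g1 : Nat.gcd (x+y) x = Nat.gcd x y := by simp [Nat.gcd_comm]
        have g2 : Nat.gcd (x+y) y = Nat.gcd x y := by simp
        simp only [g1, g2]
        split_ifs
        · field_simp
          ring
        · simp
      · rw [if_neg hxy, add_zero]
        have : M < x + y ↔ M + 1 < x + y := by omega
        simp only [this]
    have e5 : ∑ x ∈ Finset.Icc 1 M, g (M + 1 - x) = ∑ x ∈ Finset.Icc 1 M, g x := by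
      refine Finset.sum_nbij' (fun x => M + 1 - x) (fun x => M + 1 - x) ?_ ?_ ?_ ?_ ?_ <;>
        intro x hx <;> simp at * <;> omega
    rw [e1, e2, e3]
    rw [e4, Finset.sum_add_distrib, e5] at ih
    linarith

lemma aux_inner (M : ℕ) (hM : 1 ≤ M) (Q : ℝ) :
    ∑ x ∈ Finset.Icc 1 M, ∑ y ∈ Finset.Icc 1 M,
      (if M < x + y ∧ Nat.gcd x y = 1 then ((x:ℝ) + y - Q) / ((x:ℝ) * y) else 0) =
    2 * ∑ x ∈ Finset.Icc 1 M, (Nat.totient x : ℝ) / x - Q := by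
  have key : ∑ x ∈ Finset.Icc 1 M, ∑ y ∈ Finset.Icc 1 M,
      (if M < x + y ∧ Nat.gcd x y = 1 then 1 / (x:ℝ) else 0) =
      ∑ x ∈ Finset.Icc 1 M, (Nat.totient x : ℝ) / x := by
    refine Finset.sum_congr rfl fun x hx => ?_
    simp only [Finset.mem_Icc] at hx
    rw [← Finset.sum_filter, Finset.sum_const, nsmul_eq_mul, mul_one_div,
      ← Nat.filter_coprime_Ico_eq_totient x (M + 1 - x)]
    congr 3
    ext y
    simp only [Finset.mem_filter, Finset.mem_Icc, Finset.mem_Ico, Nat.Coprime]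
    constructor
    · rintro ⟨h1, h2, h3⟩; exact ⟨by omega, h3⟩
    · rintro ⟨h1, h3⟩; exact ⟨by omega, by omega, h3⟩
  have key2 : ∑ x ∈ Finset.Icc 1 M, ∑ y ∈ Finset.Icc 1 M,
      (if M < x + y ∧ Nat.gcd x y = 1 then 1 / (y:ℝ) else 0) =
      ∑ x ∈ Finset.Icc 1 M, (Nat.totient x : ℝ) / x := by
    rw [← key, Finset.sum_comm]
    refine Finset.sum_congr rfl fun x hx => Finset.sum_congr rfl fun y hy => ?_
    simp only [Nat.gcd_comm y x, add_comm y x]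
  have key3 := aux_farey M hM
  calc _ = ∑ x ∈ Finset.Icc 1 M, ∑ y ∈ Finset.Icc 1 M,
      ((if M < x + y ∧ Nat.gcd x y = 1 then 1 / (x:ℝ) else 0) +
      (if M < x + y ∧ Nat.gcd x y = 1 then 1 / (y:ℝ) else 0) -
      Q * (if M < x + y ∧ Nat.gcd x y = 1 then 1 / ((x:ℝ) * y) else 0)) := by
        refine Finset.sum_congr rfl fun x hx => Finset.sum_congr rfl fun y hy => ?_
        simp only [Finset.mem_Icc] at hx hy
        have hx0 : (0:ℝ) < x := by exact_mod_cast hx.1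
        have hy0 : (0:ℝ) < y := by exact_mod_cast hy.1
        split_ifs
        · field_simp
          ring
        · simp
    _ = _ := by
        simp only [Finset.sum_sub_distrib, Finset.sum_add_distrib, ← Finset.mul_sum]
        rw [key, key2, key3]; ring

lemma aux_div (ε : ℝ) (hε : 0 < ε) : ∃ C : ℝ, 1 ≤ C ∧ ∀ n : ℕ, 1 ≤ n →
    (n.divisors.card : ℝ) ≤ C * (n:ℝ) ^ ε := by
  have hl2 : 0 < Real.log 2 := Real.log_pos (by norm_num)
  let K : ℝ := 1 + 1 / (ε * Real.log 2)
  have hK : 1 ≤ K := by simp only [K]; have : 0 < 1 / (ε * Real.log 2) := by positivity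
                        linarith
  let B : ℕ := ⌈(2:ℝ) ^ (1/ε)⌉₊
  let c : ℕ → ℝ := fun p => if p < B then K else 1
  have hc1 : ∀ p, 1 ≤ c p := fun p => by simp only [c]; split_ifs <;> linarith
  have hloc : ∀ p a : ℕ, p.Prime → ((a:ℝ) + 1) ≤ c p * ((p:ℝ) ^ a) ^ ε := by
    intro p a hp
    have hp2 : (2:ℝ) ≤ p := by exact_mod_cast hp.two_le
    have hsw : ((p:ℝ) ^ a) ^ ε = ((p:ℝ) ^ ε) ^ a := by
      rw [← Real.rpow_natCast, ← Real.rpow_natCast, ← Real.rpow_mul (by positivity),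
        ← Real.rpow_mul (by positivity), mul_comm]
    simp only [c]
    split_ifs with h
    · have h1 : ((2:ℝ)^a)^ε ≤ ((p:ℝ) ^ a) ^ ε := by gcongr
      have h2 : 1 + ε * Real.log 2 * a ≤ ((2:ℝ)^a)^ε := by
        rw [Real.rpow_def_of_pos (by positivity), Real.log_pow]
        have := Real.add_one_le_exp (a * Real.log 2 * ε)
        linarith
      have h3 : (a:ℝ) + 1 ≤ K * (1 + ε * Real.log 2 * a) := by
        have : K * (1 + ε * Real.log 2 * a) = 1 + ε * Real.log 2 * a + 1 / (ε * Real.log 2) + a := by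
          simp only [K]; field_simp; ring
        rw [this]
        have : 0 ≤ ε * Real.log 2 * a + 1 / (ε * Real.log 2) := by positivity
        linarith
      refine h3.trans ?_
      gcongr
      linarith
    · rw [hsw, one_mul]
      have hB : (2:ℝ) ^ (1/ε) ≤ p := (Nat.le_ceil _).trans (by exact_mod_cast not_lt.1 h)
      have h2 : (2:ℝ) ≤ (p:ℝ) ^ ε := by
        calc (2:ℝ) = ((2:ℝ) ^ (1/ε)) ^ ε := by
              rw [← Real.rpow_mul (by norm_num)]; field_simp; simp
          _ ≤ _ := by gcongr
      calc (a:ℝ) + 1 ≤ 2 ^ a := by exact_mod_cast Nat.lt_two_pow_self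
        _ ≤ _ := by gcongr
  refine ⟨∏ p ∈ Finset.range B, K, ?_, fun n hn => ?_⟩
  · rw [Finset.prod_const]; exact one_le_pow₀ hK
  have hn0 : n ≠ 0 := by omega
  rw [Nat.card_divisors hn0]
  push_cast
  calc ∏ p ∈ n.primeFactors, ((n.factorization p : ℝ) + 1)
      ≤ ∏ p ∈ n.primeFactors, (c p * ((p:ℝ) ^ (n.factorization p)) ^ ε) := by
        refine Finset.prod_le_prod (fun _ _ => by positivity) fun p hp => ?_
        exact hloc p _ (Nat.prime_of_mem_primeFactors hp)
    _ = (∏ p ∈ n.primeFactors, c p) * (n:ℝ) ^ ε := by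
        rw [Finset.prod_mul_distrib, Real.finsetProd_rpow _ _ (fun _ _ => by positivity)]
        congr 2
        have := Nat.prod_factorization_pow_eq_self hn0
        conv_rhs => rw [← this]
        rw [Finsupp.prod]
        push_cast
        rfl
    _ ≤ _ := by
        gcongr
        rw [← Finset.prod_filter_mul_prod_filter_not n.primeFactors (· < B)]
        have z : ∏ p ∈ n.primeFactors.filter (fun p => ¬ p < B), c p = 1 := by
          refine Finset.prod_eq_one fun p hp => ?_
          simp only [Finset.mem_filter] at hp
          simp only [c, if_neg hp.2]
        have z' : ∏ p ∈ n.primeFactors.filter (fun p => p < B), c p =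
          ∏ p ∈ n.primeFactors.filter (fun p => p < B), K := by
          refine Finset.prod_congr rfl fun p hp => ?_
          simp only [Finset.mem_filter] at hp
          simp only [c, if_pos hp.2]
        rw [z, z', mul_one, Finset.prod_const, Finset.prod_const]
        refine pow_le_pow_right₀ hK (Finset.card_le_card fun p hp => ?_)
        simp only [Finset.mem_filter] at hp
        simpa using hp.2

lemma aux_one (N r : ℕ) (hr : 1 ≤ r) (hrN : r ≤ N) :
    |(∑ x ∈ Finset.Icc 1 N, ∑ y ∈ Finset.Icc 1 N,
          if x * r ≤ N ∧ y * r ≤ N ∧ N < (x + y) * r ∧ Nat.gcd x y = 1 then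
            (N : ℝ) * ((x : ℝ) + (y : ℝ) - (N : ℝ) / (r : ℝ)) / ((x : ℝ) * (y : ℝ))
          else 0) - (2 / (Real.pi ^ 2 / 6) - 1) * (N : ℝ) ^ 2 * ((1 : ℝ) / r)| ≤
      N * (8 + 2 * Real.log N) := by
  have hM : 1 ≤ N / r := (Nat.one_le_div_iff (by omega)).2 hrN
  have hr0 : (0:ℝ) < r := by exact_mod_cast hr
  have hMN : N / r ≤ N := Nat.div_le_self _ _
  have hsub : Finset.Icc 1 (N / r) ⊆ Finset.Icc 1 N := Finset.Icc_subset_Icc le_rfl hMN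
  have e : (∑ x ∈ Finset.Icc 1 N, ∑ y ∈ Finset.Icc 1 N,
          if x * r ≤ N ∧ y * r ≤ N ∧ N < (x + y) * r ∧ Nat.gcd x y = 1 then
            (N : ℝ) * ((x : ℝ) + (y : ℝ) - (N : ℝ) / (r : ℝ)) / ((x : ℝ) * (y : ℝ))
          else 0) = N * (2 * ∑ x ∈ Finset.Icc 1 (N / r), (Nat.totient x : ℝ) / x - (N : ℝ) / r) := by
    rw [← aux_inner (N / r) hM, Finset.mul_sum]
    symm
    have hle : ∀ x, x * r ≤ N ↔ x ≤ N / r := fun x => (Nat.le_div_iff_mul_le (by omega)).symm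
    have hlt : ∀ x, N < x * r ↔ N / r < x := fun x => (Nat.div_lt_iff_lt_mul (by omega)).symm
    simp only [hle, hlt]
    refine Eq.trans ?_ (Finset.sum_subset hsub ?_)
    swap
    · intro x hx hx'
      refine Finset.sum_eq_zero fun y _ => if_neg ?_
      simp only [Finset.mem_Icc] at hx hx'
      rintro ⟨h1, -⟩
      omega
    · refine Finset.sum_congr rfl fun x hx => ?_
      rw [Finset.mul_sum]
      refine Eq.trans ?_ (Finset.sum_subset hsub ?_)
      swap
      · intro y hy hy'
        refine if_neg ?_
        simp only [Finset.mem_Icc] at hy hy'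
        rintro ⟨-, h1, -⟩
        omega
      · refine Finset.sum_congr rfl fun y hy => ?_
        simp only [Finset.mem_Icc] at hx hy
        simp only [hx.2, hy.2, true_and]
        split_ifs
        · ring
        · simp
  rw [e]
  have hphi := aux_phi (N / r)
  have hlog : Real.log ((N / r : ℕ) : ℝ) ≤ Real.log N :=
    Real.log_le_log (by exact_mod_cast hM) (by exact_mod_cast hMN)
  set P := ∑ x ∈ Finset.Icc 1 (N / r), (Nat.totient x : ℝ) / x
  have hz1 : 1 / (Real.pi ^ 2 / 6) ≤ 1 := by
    rw [div_le_one (by positivity)]; nlinarith [Real.pi_gt_three]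
  have hz0 : 0 ≤ 1 / (Real.pi ^ 2 / 6) := by positivity
  have hz2 : 2 / (Real.pi ^ 2 / 6) = 2 * (1 / (Real.pi ^ 2 / 6)) := by ring
  rw [hz2]
  set z := 1 / (Real.pi ^ 2 / 6)
  have hfl : |((N / r : ℕ) : ℝ) - (N:ℝ) / r| ≤ 1 := by
    rw [← Nat.floor_div_eq_div (K := ℝ)]
    have a1 := Nat.floor_le (show (0:ℝ) ≤ (N:ℝ)/r by positivity)
    have a2 := Nat.lt_floor_add_one ((N:ℝ)/r)
    rw [abs_le]; constructor <;> linarith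
  have hfz : |(((N / r : ℕ) : ℝ) - (N:ℝ) / r) * z| ≤ 1 := by
    rw [abs_mul, abs_of_nonneg hz0]
    exact mul_le_one₀ hfl hz0 hz1
  have : N * (2 * P - (N : ℝ) / r) - (2 * z - 1) * (N : ℝ) ^ 2 * ((1 : ℝ) / r) =
      N * (2 * (P - ((N / r : ℕ) : ℝ) * z) + 2 * ((((N / r : ℕ) : ℝ) - (N:ℝ) / r) * z)) := by
    ring
  rw [this, abs_mul, abs_of_nonneg (by positivity : (0:ℝ) ≤ N)]
  gcongr
  rw [abs_le] at *
  constructor <;> linarith [hphi.1, hphi.2, hfz.1, hfz.2]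

theorem stmt5 :
    ∀ ε : ℝ, 0 < ε → ∃ C : ℝ, 0 < C ∧ ∀ h N : ℕ, 1 ≤ h → h ≤ 2 * N ^ 2 →
      |(∑ r ∈ h.divisors.filter (· ≤ N), ∑ x ∈ Finset.Icc 1 N, ∑ y ∈ Finset.Icc 1 N,
          if x * r ≤ N ∧ y * r ≤ N ∧ N < (x + y) * r ∧ Nat.gcd x y = 1 then
            (N : ℝ) * ((x : ℝ) + (y : ℝ) - (N : ℝ) / (r : ℝ)) / ((x : ℝ) * (y : ℝ))
          else 0)
        - (2 / (Real.pi ^ 2 / 6) - 1) * (N : ℝ) ^ 2 * ∑ r ∈ h.divisors, (1 : ℝ) / r| ≤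
        C * (N : ℝ) ^ ((1 : ℝ) + ε) := by

  intro ε hε
  obtain ⟨C1, hC1, hd⟩ := aux_div (ε / 4) (by positivity)
  refine ⟨C1 * (2:ℝ) ^ (ε / 4) * (8 + 4 / ε), by positivity, fun h N hh hhN => ?_⟩
  have hN : 1 ≤ N := by
    rcases Nat.eq_zero_or_pos N with rfl | h0
    · simp at hhN; omega
    · exact h0
  have hN1 : (1:ℝ) ≤ N := by exact_mod_cast hN
  have hlog0 : 0 ≤ Real.log N := Real.log_nonneg hN1
  rw [Finset.sum_filter, Finset.mul_sum, ← Finset.sum_sub_distrib]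
  have step : ∀ r ∈ h.divisors, |(if r ≤ N then (∑ x ∈ Finset.Icc 1 N, ∑ y ∈ Finset.Icc 1 N,
          if x * r ≤ N ∧ y * r ≤ N ∧ N < (x + y) * r ∧ Nat.gcd x y = 1 then
            (N : ℝ) * ((x : ℝ) + (y : ℝ) - (N : ℝ) / (r : ℝ)) / ((x : ℝ) * (y : ℝ))
          else 0) else 0) - (2 / (Real.pi ^ 2 / 6) - 1) * (N : ℝ) ^ 2 * ((1 : ℝ) / r)| ≤
      N * (8 + 2 * Real.log N) := by
    intro r hr
    have hr1 : 1 ≤ r := Nat.pos_of_mem_divisors hr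
    split_ifs with hrN
    · exact aux_one N r hr1 hrN
    · have hr0 : (0:ℝ) < r := by exact_mod_cast hr1
      have hrN' : (N:ℝ) ≤ r := by exact_mod_cast (not_le.1 hrN).le
      have hz : |2 / (Real.pi ^ 2 / 6) - 1| ≤ 1 := by
        have a : 2 / (Real.pi ^ 2 / 6) ≤ 2 := by
          rw [div_le_iff₀ (by positivity)]; nlinarith [Real.pi_gt_three]
        have b : 0 ≤ 2 / (Real.pi ^ 2 / 6) := by positivity
        rw [abs_le]; constructor <;> linarith
      rw [zero_sub, abs_neg, mul_assoc, abs_mul]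
      have h1 : |(N:ℝ) ^ 2 * ((1:ℝ) / r)| ≤ (N:ℝ) := by
        rw [abs_of_nonneg (by positivity), mul_one_div, div_le_iff₀ hr0, sq]
        gcongr
      calc _ ≤ 1 * (N:ℝ) := mul_le_mul hz h1 (abs_nonneg _) (by norm_num)
        _ ≤ _ := by nlinarith
  refine (Finset.abs_sum_le_sum_abs _ _).trans ((Finset.sum_le_sum step).trans ?_)
  rw [Finset.sum_const, nsmul_eq_mul]
  have hcard : (h.divisors.card : ℝ) ≤ C1 * ((2:ℝ) ^ (ε / 4) * (N:ℝ) ^ (ε / 2)) := by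
    refine (hd h hh).trans ?_
    have e2 : (2:ℝ) ^ (ε / 4) * (N:ℝ) ^ (ε / 2) = (2 * (N:ℝ) ^ 2) ^ (ε / 4) := by
      rw [Real.mul_rpow (by norm_num) (by positivity), ← Real.rpow_natCast,
        ← Real.rpow_mul (by positivity)]
      congr 2
      push_cast; ring
    rw [e2]
    gcongr
    exact_mod_cast hhN
  have hlog : 8 + 2 * Real.log N ≤ (8 + 4 / ε) * (N:ℝ) ^ (ε / 2) := by
    have a := Real.log_le_rpow_div (x := (N:ℝ)) (by positivity) (ε := ε / 2) (by positivity)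
    have b : 1 ≤ (N:ℝ) ^ (ε / 2) := Real.one_le_rpow hN1 (by positivity)
    have c : (N:ℝ) ^ (ε / 2) / (ε / 2) = 2 / ε * (N:ℝ) ^ (ε / 2) := by field_simp
    rw [c] at a
    have d : (8 + 4 / ε) * (N:ℝ) ^ (ε / 2) = 8 * (N:ℝ) ^ (ε / 2) + 2 * (2 / ε * (N:ℝ) ^ (ε / 2)) := by
      ring
    rw [d]; linarith
  have hpow : (N:ℝ) ^ (1 + ε) = N * ((N:ℝ) ^ (ε / 2) * (N:ℝ) ^ (ε / 2)) := by
    rw [← Real.rpow_add (by positivity), Real.rpow_add (by positivity), Real.rpow_one]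
    congr 2; ring
  calc _ ≤ C1 * ((2:ℝ) ^ (ε / 4) * (N:ℝ) ^ (ε / 2)) * (N * ((8 + 4 / ε) * (N:ℝ) ^ (ε / 2))) := by
        gcongr
    _ = _ := by rw [hpow]; ring
end

section
/- There exists an absolute constant C > 0 such that for every real number X ≥ 1, one has |S(X) − (2 − ζ(2))·X| ≤ C, where S(X) = Σ_{x,y} (x + y − X)/(x·y) with the sum over pairs of positive integers x, y satisfying x ≤ X, y ≤ X and x + y > X. -/
/-- `S X = Σ_{1 ≤ x,y ≤ X, x+y > X} (x + y − X)/(x·y)`, summed over positive integers `x, y`. -/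
noncomputable def S (X : ℝ) : ℝ :=
  ∑ x ∈ Finset.Icc 1 ⌊X⌋₊, ∑ y ∈ Finset.Icc 1 ⌊X⌋₊,
    if X < (x : ℝ) + (y : ℝ) then ((x : ℝ) + (y : ℝ) - X) / ((x : ℝ) * (y : ℝ)) else 0

open Finset in
lemma aux_B (N : ℕ) :
    (∑ x ∈ range N, ∑ y ∈ range N,
      if N ≤ x + y + 1 then 1 / (((x : ℝ) + 1) * ((y : ℝ) + 1)) else 0)
      = ∑ x ∈ range N, 1 / ((x : ℝ) + 1) ^ 2 := by
  induction N with
  | zero => simp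
  | succ N ih =>
    have hdiag : (∑ x ∈ range N, ∑ y ∈ range N,
        if y = N - 1 - x then 1 / (((x : ℝ) + 1) * ((y : ℝ) + 1)) else 0)
        = 2 / ((N : ℝ) + 1) * ∑ x ∈ range N, 1 / ((x : ℝ) + 1) := by
      have h1 : ∀ x ∈ range N, (∑ y ∈ range N,
          if y = N - 1 - x then 1 / (((x : ℝ) + 1) * ((y : ℝ) + 1)) else 0)
          = 1 / ((N : ℝ) + 1) * (1 / ((x : ℝ) + 1))
            + 1 / ((N : ℝ) + 1) * (1 / (((N - 1 - x : ℕ) : ℝ) + 1)) := by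
        intro x hx
        have hx' := mem_range.1 hx
        rw [sum_ite_eq' (range N) (N - 1 - x), if_pos (mem_range.2 (by omega))]
        have : ((N : ℝ)) = (x : ℝ) + ((N - 1 - x : ℕ) : ℝ) + 1 := by
          have : N = x + (N - 1 - x) + 1 := by omega
          exact_mod_cast this
        rw [this]
        have := (Nat.cast_nonneg x : (0 : ℝ) ≤ x)
        have := (Nat.cast_nonneg (N - 1 - x) : (0 : ℝ) ≤ (N - 1 - x : ℕ))
        generalize ((N - 1 - x : ℕ) : ℝ) = z at *
        field_simp
        ring
      rw [sum_congr rfl h1, sum_add_distrib, ← mul_sum, ← mul_sum,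
        sum_range_reflect (fun x : ℕ => 1 / ((x : ℝ) + 1)) N]
      ring
    have hsplit : (∑ x ∈ range N, ∑ y ∈ range N,
        if N ≤ x + y + 1 then 1 / (((x : ℝ) + 1) * ((y : ℝ) + 1)) else 0)
        = (∑ x ∈ range N, ∑ y ∈ range N,
        if N + 1 ≤ x + y + 1 then 1 / (((x : ℝ) + 1) * ((y : ℝ) + 1)) else 0)
        + (∑ x ∈ range N, ∑ y ∈ range N,
        if y = N - 1 - x then 1 / (((x : ℝ) + 1) * ((y : ℝ) + 1)) else 0) := by
      rw [← sum_add_distrib]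
      refine sum_congr rfl fun x hx => ?_
      rw [← sum_add_distrib]
      refine sum_congr rfl fun y hy => ?_
      have hx' := mem_range.1 hx
      have hy' := mem_range.1 hy
      by_cases h1 : N + 1 ≤ x + y + 1
      · rw [if_pos (by omega), if_pos h1, if_neg (by omega), add_zero]
      · by_cases h2 : y = N - 1 - x
        · rw [if_pos (by omega), if_neg h1, if_pos h2, zero_add]
        · rw [if_neg (by omega), if_neg h1, if_neg h2, zero_add]
    have hbig : (∑ x ∈ range (N + 1), ∑ y ∈ range (N + 1),
        if N + 1 ≤ x + y + 1 then 1 / (((x : ℝ) + 1) * ((y : ℝ) + 1)) else 0)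
        = (∑ x ∈ range N, ∑ y ∈ range N,
        if N + 1 ≤ x + y + 1 then 1 / (((x : ℝ) + 1) * ((y : ℝ) + 1)) else 0)
        + 2 / ((N : ℝ) + 1) * (∑ x ∈ range N, 1 / ((x : ℝ) + 1))
        + 1 / ((N : ℝ) + 1) ^ 2 := by
      simp only [sum_range_succ, sum_add_distrib]
      have e1 : ∀ x ∈ range N, (if N + 1 ≤ x + N + 1 then
          1 / (((x : ℝ) + 1) * ((N : ℝ) + 1)) else 0)
          = 1 / ((N : ℝ) + 1) * (1 / ((x : ℝ) + 1)) := by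
        intro x _
        rw [if_pos (by omega), one_div_mul_one_div, mul_comm]
      have e2 : ∀ x ∈ range N, (if N + 1 ≤ N + x + 1 then
          1 / (((N : ℝ) + 1) * ((x : ℝ) + 1)) else 0)
          = 1 / ((N : ℝ) + 1) * (1 / ((x : ℝ) + 1)) := by
        intro x _
        rw [if_pos (by omega), one_div_mul_one_div]
      rw [sum_congr rfl e1, sum_congr rfl e2, ← mul_sum, if_pos (by omega)]
      ring
    rw [hbig, sum_range_succ, ← ih, hsplit, hdiag]

open Finset in
lemma aux_A (N : ℕ) :
    (∑ x ∈ range N, ∑ y ∈ range N,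
      if N ≤ x + y + 1 then 1 / ((x : ℝ) + 1) else 0) = N := by
  have h : ∀ x ∈ range N, (∑ y ∈ range N,
      if N ≤ x + y + 1 then 1 / ((x : ℝ) + 1) else 0) = 1 := by
    intro x hx
    have hx' := mem_range.1 hx
    rw [← sum_filter]
    have : (range N).filter (fun y => N ≤ x + y + 1) = Ico (N - 1 - x) N := by
      ext y; simp only [mem_filter, mem_range, mem_Ico]; omega
    rw [this, sum_const, Nat.card_Ico, show N - (N - 1 - x) = x + 1 by omega, nsmul_eq_mul]
    push_cast
    have := (Nat.cast_nonneg x : (0 : ℝ) ≤ x)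
    field_simp
  rw [sum_congr rfl h]; simp

open Finset in
lemma aux_S (X : ℝ) (hX : 1 ≤ X) :
    S X = 2 * (⌊X⌋₊ : ℝ) - X * ∑ x ∈ range ⌊X⌋₊, 1 / ((x : ℝ) + 1) ^ 2 := by
  have h1 : (⌊X⌋₊ : ℝ) ≤ X := Nat.floor_le (by linarith)
  have h2 : X < (⌊X⌋₊ : ℝ) + 1 := Nat.lt_floor_add_one X
  unfold S
  set N := ⌊X⌋₊ with hN
  have hA := aux_A N
  have hA' := aux_A N
  rw [sum_comm] at hA'
  have hIcc : ∀ f : ℕ → ℝ, ∑ x ∈ Icc 1 N, f x = ∑ x ∈ range N, f (x + 1) := by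
    intro f
    rw [range_eq_Ico, sum_Ico_add' f 0 N 1]
    rfl
  rw [← aux_B]
  simp only [hIcc]
  calc _ = (∑ x ∈ range N, ∑ y ∈ range N,
      if N ≤ x + y + 1 then 1 / ((x : ℝ) + 1) else 0)
      + (∑ y ∈ range N, ∑ x ∈ range N,
      if N ≤ x + y + 1 then 1 / ((x : ℝ) + 1) else 0)
      - X * (∑ x ∈ range N, ∑ y ∈ range N,
      if N ≤ x + y + 1 then 1 / (((x : ℝ) + 1) * ((y : ℝ) + 1)) else 0) := by
        simp only [mul_sum, ← sum_add_distrib, ← sum_sub_distrib]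
        refine sum_congr rfl fun x _ => sum_congr rfl fun y _ => ?_
        have := (Nat.cast_nonneg x : (0 : ℝ) ≤ x)
        have := (Nat.cast_nonneg y : (0 : ℝ) ≤ y)
        have key : 1 / ((x : ℝ) + 1) + 1 / ((y : ℝ) + 1)
            - X * (1 / (((x : ℝ) + 1) * ((y : ℝ) + 1)))
            = (((x : ℝ) + 1) + ((y : ℝ) + 1) - X) / (((x : ℝ) + 1) * ((y : ℝ) + 1)) := by
          field_simp
          ring
        have hsw : y + x + 1 = x + y + 1 := by omega
        push_cast
        rw [hsw]
        by_cases hc : N ≤ x + y + 1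
        · simp only [if_pos hc]
          rw [key]
          split_ifs with h
          · rfl
          · have h3 : (N : ℝ) ≤ x + y + 1 := by exact_mod_cast hc
            have : ((x : ℝ) + 1) + ((y : ℝ) + 1) - X = 0 := by linarith
            rw [this, zero_div]
        · simp only [if_neg hc]
          have h3 : (x : ℝ) + y + 2 ≤ N := by
            have : x + y + 2 ≤ N := by omega
            exact_mod_cast this
          rw [if_neg (by linarith)]
          ring
    _ = _ := by rw [hA, hA']; ring

open Finset in
lemma aux_tail_s6 (N : ℕ) (hN : 1 ≤ N) :
    (∑ x ∈ range N, 1 / ((x : ℝ) + 1) ^ 2) ≤ Real.pi ^ 2 / 6 ∧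
    Real.pi ^ 2 / 6 ≤ (∑ x ∈ range N, 1 / ((x : ℝ) + 1) ^ 2) + 1 / N := by
  have hs : HasSum (fun x : ℕ => 1 / ((x : ℝ) + 1) ^ 2) (Real.pi ^ 2 / 6) := by
    have := (hasSum_nat_add_iff' 1).2 hasSum_zeta_two
    simpa using this
  refine ⟨sum_le_hasSum _ (fun i _ => by positivity) hs, ?_⟩
  have ht := (Filter.tendsto_add_atTop_iff_nat N).2 hs.tendsto_sum_nat
  refine le_of_tendsto' ht fun k => ?_
  have hN' : (1 : ℝ) ≤ N := by exact_mod_cast hN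
  have : (∑ x ∈ range (k + N), 1 / ((x : ℝ) + 1) ^ 2)
      ≤ (∑ x ∈ range N, 1 / ((x : ℝ) + 1) ^ 2) + 1 / N - 1 / ((k : ℝ) + N) := by
    induction k with
    | zero => simp
    | succ k ih =>
      rw [show k + 1 + N = (k + N) + 1 by ring, sum_range_succ]
      push_cast
      have hk := (Nat.cast_nonneg k : (0 : ℝ) ≤ k)
      have h0 : 0 < (k : ℝ) + N := by linarith
      have : 1 / ((k : ℝ) + N + 1) ^ 2 ≤ 1 / ((k : ℝ) + N) - 1 / ((k : ℝ) + 1 + N) := by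
        rw [show (k : ℝ) + 1 + N = (k : ℝ) + N + 1 by ring]
        generalize (k : ℝ) + N = z at *
        rw [div_sub_div _ _ (by positivity) (by positivity),
          div_le_div_iff₀ (by positivity) (by positivity)]
        nlinarith
      linarith
  have : 0 ≤ 1 / ((k : ℝ) + N) := by positivity
  linarith

theorem stmt6 :
    ∃ C : ℝ, 0 < C ∧ ∀ X : ℝ, 1 ≤ X → |S X - (2 - Real.pi ^ 2 / 6) * X| ≤ C := by
  refine ⟨2, by norm_num, fun X hX => ?_⟩
  have h1 : (⌊X⌋₊ : ℝ) ≤ X := Nat.floor_le (by linarith)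
  have h2 : X < (⌊X⌋₊ : ℝ) + 1 := Nat.lt_floor_add_one X
  have hN : 1 ≤ ⌊X⌋₊ := Nat.le_floor (by simpa using hX)
  have hN' : (1 : ℝ) ≤ ⌊X⌋₊ := by exact_mod_cast hN
  obtain ⟨t1, t2⟩ := aux_tail_s6 _ hN
  rw [aux_S X hX]
  generalize (∑ x ∈ Finset.range ⌊X⌋₊, 1 / ((x : ℝ) + 1) ^ 2) = H at *
  generalize (⌊X⌋₊ : ℝ) = N at *
  have h3 : X * (Real.pi ^ 2 / 6 - H) ≤ X * (1 / N) :=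
    mul_le_mul_of_nonneg_left (by linarith) (by linarith)
  have h4 : 0 ≤ X * (Real.pi ^ 2 / 6 - H) := mul_nonneg (by linarith) (by linarith)
  have h5 : X * (1 / N) ≤ 2 := by
    rw [mul_one_div, div_le_iff₀ (by linarith)]; linarith
  rw [abs_le]
  constructor <;> nlinarith
end

section
/- For every ε > 0 there exists a constant C_ε > 0 with the following property. Let N, h be positive integers with 1 ≤ h ≤ 2N², let r be a positive divisor of h with r ≤ N, and set m = h/r and M = N/r (a rational number). Then the number of pairs of coprime positive integers x, y with x ≤ M, y ≤ M, x + y > M, and such that U(x,y) is an integer, is at most C_ε · M · m^ε. Here, for such a pair (x,y), b₀ = b₀(x,y) is the unique integer with 1 ≤ b₀ ≤ y and y | (b₀·x − m), d₀ = d₀(x,y) = (m − b₀·x)/y, and U(x,y) = max{(1 − b₀)/y, (d₀ − N)/x}. -/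
open scoped Classical

/-- The predicate: coprime positive `x,y` with `x ≤ M`, `y ≤ M`, `x + y > M` (where `M = N/r`
as a rational, encoded via multiplication by `r`), such that, for the unique integer
`b₀ ∈ [1,y]` with `y ∣ (b₀·x − m)` (where `m = h/r`) and `d₀ = (m − b₀·x)/y`,
the quantity `U(x,y) = max{(1 − b₀)/y, (d₀ − N)/x}` is an integer. -/
def goodPair (N h r : ℕ) (p : ℕ × ℕ) : Prop :=
  p.1 * r ≤ N ∧ p.2 * r ≤ N ∧ N < (p.1 + p.2) * r ∧ Nat.gcd p.1 p.2 = 1 ∧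
    ∃ b : ℤ, 1 ≤ b ∧ b ≤ (p.2 : ℤ) ∧ (p.2 : ℤ) ∣ (b * (p.1 : ℤ) - ((h / r : ℕ) : ℤ)) ∧
      ∃ k : ℤ, (k : ℚ) =
        max ((1 - (b : ℚ)) / (p.2 : ℚ))
          (((((h / r : ℕ) : ℚ) - (b : ℚ) * (p.1 : ℚ)) / (p.2 : ℚ) - (N : ℚ)) / (p.1 : ℚ))

theorem divisor_bound (ε : ℝ) (hε : 0 < ε) : ∃ C : ℝ, 0 < C ∧ ∀ n : ℕ, n ≠ 0 →
    (n.divisors.card : ℝ) ≤ C * (n : ℝ) ^ ε := by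
  have hl : 0 < Real.log 2 := Real.log_pos (by norm_num)
  set K : ℝ := 1 + 1 / (ε * Real.log 2) with hK
  have hK1 : 1 ≤ K := by
    have : 0 ≤ 1 / (ε * Real.log 2) := by positivity
    linarith
  set B : ℕ := ⌈(2 : ℝ) ^ (1 / ε)⌉₊ with hB
  refine ⟨K ^ B, by positivity, fun n hn => ?_⟩
  have key : ∀ p ∈ n.primeFactors, ((n.factorization p + 1 : ℕ) : ℝ) ≤
      (if p < B then K else 1) * ((p : ℝ) ^ n.factorization p) ^ ε := by
    intro p hp
    have hp2 : (2 : ℝ) ≤ p := by exact_mod_cast (Nat.prime_of_mem_primeFactors hp).two_le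
    generalize n.factorization p = a
    have hcomm : ((p : ℝ) ^ a) ^ ε = ((p : ℝ) ^ ε) ^ a := by
      rw [← Real.rpow_natCast, ← Real.rpow_natCast, ← Real.rpow_mul (by positivity),
        ← Real.rpow_mul (by positivity), mul_comm]
    rw [hcomm]
    split_ifs with h
    · have h1 : 1 + ε * Real.log 2 ≤ (2 : ℝ) ^ ε := by
        rw [Real.rpow_def_of_pos (by norm_num)]
        have := Real.add_one_le_exp (Real.log 2 * ε)
        linarith
      have h2 : (2 : ℝ) ^ ε ≤ (p : ℝ) ^ ε := Real.rpow_le_rpow (by norm_num) hp2 hε.le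
      have h3 : 1 + (a : ℝ) * (ε * Real.log 2) ≤ ((p : ℝ) ^ ε) ^ a := by
        refine le_trans (one_add_mul_le_pow (by nlinarith [mul_pos hε hl]) a) ?_
        exact pow_le_pow_left₀ (by positivity) (h1.trans h2) a
      have hpos := mul_pos hε hl
      have h4 : K * (1 + (a : ℝ) * (ε * Real.log 2)) =
          1 + a + (1 / (ε * Real.log 2) + a * (ε * Real.log 2)) := by
        rw [hK]; field_simp; ring
      have h5 : 0 ≤ 1 / (ε * Real.log 2) + a * (ε * Real.log 2) := by positivity
      have h6 := mul_le_mul_of_nonneg_left h3 (by linarith : 0 ≤ K)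
      push_cast
      linarith
    · have h1 : (2 : ℝ) ≤ (p : ℝ) ^ ε := by
        have h2 : (2 : ℝ) ^ (1 / ε) ≤ p :=
          (Nat.le_ceil _).trans (by exact_mod_cast not_lt.mp h)
        have := Real.rpow_le_rpow (by positivity) h2 hε.le
        rwa [← Real.rpow_mul (by norm_num), one_div_mul_cancel hε.ne', Real.rpow_one] at this
      have h2 : ((a + 1 : ℕ) : ℝ) ≤ 2 ^ a := by exact_mod_cast Nat.lt_two_pow_self
      rw [one_mul]
      exact h2.trans (pow_le_pow_left₀ (by norm_num) h1 a)
  rw [Nat.card_divisors hn, Nat.cast_prod]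
  refine (Finset.prod_le_prod (fun _ _ => by positivity) key).trans ?_
  rw [Finset.prod_mul_distrib, Real.finsetProd_rpow _ _ (fun _ _ => by positivity)]
  have hn' : ∏ p ∈ n.primeFactors, (p : ℝ) ^ n.factorization p = n := by
    conv_rhs => rw [← Nat.prod_factorization_pow_eq_self hn]
    simp [Finsupp.prod]
  rw [hn']
  refine mul_le_mul_of_nonneg_right ?_ (by positivity)
  rw [← Finset.prod_filter, Finset.prod_const]
  refine pow_le_pow_right₀ hK1 ?_
  calc _ ≤ (Finset.range B).card := Finset.card_le_card (by
        intro p hp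
        simp at hp ⊢
        exact hp.2)
    _ = B := Finset.card_range B

/-- For a good pair, either `y ∣ x - m`, or `x` divides the positive integer `m - N y`. -/
theorem goodPair_cases (N h r x y : ℕ) (hx : 0 < x) (hy : 0 < y)
    (H : goodPair N h r (x, y)) :
    (y : ℤ) ∣ (x : ℤ) - ((h / r : ℕ) : ℤ) ∨ x ∈ (h / r - N * y).divisors := by
  obtain ⟨-, -, -, -, b, hb1, hby, ⟨c, hc⟩, k, hk⟩ := H
  simp only at hby hc hk
  generalize h / r = m at *
  have hxq : (0 : ℚ) < x := by exact_mod_cast hx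
  have hyq : (0 : ℚ) < y := by exact_mod_cast hy
  have hbyq : (b : ℚ) ≤ y := by exact_mod_cast hby
  have hk0 : 0 ≤ k := by
    have h1 : (1 - (b : ℚ)) / y ≤ k := hk ▸ le_max_left _ _
    have h2 : (-1 : ℚ) < (1 - (b : ℚ)) / y := by
      rw [lt_div_iff₀ hyq]; linarith
    have h3 : (-1 : ℚ) < k := h2.trans_le h1
    have : (-1 : ℤ) < k := by exact_mod_cast h3
    omega
  rcases max_choice ((1 - (b : ℚ)) / (y : ℚ)) ((((m : ℚ) - b * x) / y - N) / x) with h | h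
  · left
    rw [h, eq_div_iff hyq.ne'] at hk
    have h1 : k * y = 1 - b := by exact_mod_cast hk
    have h2 : 0 ≤ k * y := by positivity
    have : b = 1 := by omega
    subst this
    exact ⟨c, by linarith⟩
  · right
    rw [h, eq_div_iff hxq.ne', eq_sub_iff_add_eq, eq_div_iff hyq.ne'] at hk
    have h1 : (k * x + N) * y = (m : ℤ) - b * x := by exact_mod_cast hk
    have h2 : (m : ℤ) - N * y = x * (k * y + b) := by linarith
    have h3 : 0 < (x : ℤ) * (k * y + b) := by positivity
    have h4 : N * y < m := by zify; linarith
    rw [Nat.mem_divisors]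
    refine ⟨?_, by omega⟩
    zify [h4.le]
    exact ⟨_, h2⟩

theorem stmt8 :
    ∀ ε : ℝ, 0 < ε → ∃ C : ℝ, 0 < C ∧
      ∀ N h r : ℕ, 0 < N → 1 ≤ h → h ≤ 2 * N ^ 2 → 0 < r → r ∣ h → r ≤ N →
        ((Finset.filter (goodPair N h r) ((Finset.Icc 1 N) ×ˢ (Finset.Icc 1 N))).card : ℝ) ≤
          C * ((N : ℝ) / (r : ℝ)) * ((h / r : ℕ) : ℝ) ^ ε := by
  intro ε hε
  obtain ⟨C, hC, hdiv⟩ := divisor_bound ε hε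
  refine ⟨1 + C, by positivity, fun N h r hN h1 _ hr hrh hrN => ?_⟩
  have hm : 1 ≤ h / r := Nat.div_pos (Nat.le_of_dvd h1 hrh) hr
  have hmR : (1 : ℝ) ≤ ((h / r : ℕ) : ℝ) := by exact_mod_cast hm
  have hme : (1 : ℝ) ≤ ((h / r : ℕ) : ℝ) ^ ε := Real.one_le_rpow hmR hε.le
  set S := Finset.filter (goodPair N h r) ((Finset.Icc 1 N) ×ˢ (Finset.Icc 1 N)) with hS
  have hmaps : ∀ p ∈ S, p.2 ∈ Finset.Icc 1 (N / r) := by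
    intro p hp
    simp only [hS, Finset.mem_filter, Finset.mem_product, Finset.mem_Icc] at hp ⊢
    exact ⟨hp.1.2.1, (Nat.le_div_iff_mul_le hr).2 hp.2.2.1⟩
  have hfib : ∀ y ∈ Finset.Icc 1 (N / r),
      ((S.filter (fun p => p.2 = y)).card : ℝ) ≤ (1 + C) * ((h / r : ℕ) : ℝ) ^ ε := by
    intro y hy
    have hy0 : 0 < y := (Finset.mem_Icc.1 hy).1
    set A := (Finset.Icc 1 N).filter (fun x => x * r ≤ N ∧ N < (x + y) * r ∧
      (y : ℤ) ∣ (x : ℤ) - ((h / r : ℕ) : ℤ)) with hA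
    have hA1 : A.card ≤ 1 := by
      rw [Finset.card_le_one]
      intro a ha b hb
      simp only [hA, Finset.mem_filter] at ha hb
      obtain ⟨-, ha1, ha2, ha3⟩ := ha
      obtain ⟨-, hb1, hb2, hb3⟩ := hb
      have e1 : a < b + y := lt_of_mul_lt_mul_right (ha1.trans_lt hb2) (Nat.zero_le r)
      have e2 : b < a + y := lt_of_mul_lt_mul_right (hb1.trans_lt ha2) (Nat.zero_le r)
      have e3 : (y : ℤ) ∣ (a : ℤ) - b := by
        have := dvd_sub ha3 hb3
        simpa using this
      have e4 := Int.eq_zero_of_abs_lt_dvd e3 (by rw [abs_lt]; omega)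
      omega
    have hcard : (S.filter (fun p => p.2 = y)).card ≤
        (A ∪ (h / r - N * y).divisors).card := by
      refine Finset.card_le_card_of_injOn Prod.fst ?_ ?_
      · rintro ⟨x, y'⟩ hp
        simp only [hS, Finset.coe_filter, Finset.mem_filter, Finset.mem_product, Finset.mem_Icc,
          Set.mem_setOf_eq] at hp
        obtain ⟨⟨⟨⟨hx1, hx2⟩, -⟩, hg⟩, rfl⟩ := hp
        simp only [Finset.coe_union, Set.mem_union, Finset.mem_coe]
        rcases goodPair_cases N h r x y' hx1 hy0 hg with hh | hh
        · left
          simp only [hA, Finset.mem_filter, Finset.mem_Icc]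
          exact ⟨⟨hx1, hx2⟩, hg.1, hg.2.2.1, hh⟩
        · exact Or.inr hh
      · rintro ⟨x, y1⟩ hp ⟨x', y2⟩ hq hxx
        simp only [Finset.coe_filter, Set.mem_setOf_eq] at hp hq hxx
        rw [Prod.mk.injEq]
        exact ⟨hxx, hp.2.trans hq.2.symm⟩
    have hD : (((h / r - N * y).divisors).card : ℝ) ≤ C * ((h / r : ℕ) : ℝ) ^ ε := by
      by_cases h0 : h / r - N * y = 0
      · rw [h0]; simp; positivity
      · refine (hdiv _ h0).trans (mul_le_mul_of_nonneg_left ?_ hC.le)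
        exact Real.rpow_le_rpow (by positivity) (by exact_mod_cast Nat.sub_le _ _) hε.le
    have hle : (S.filter (fun p => p.2 = y)).card ≤ 1 + ((h / r - N * y).divisors).card :=
      hcard.trans ((Finset.card_union_le _ _).trans (Nat.add_le_add_right hA1 _))
    have hleR : ((S.filter (fun p => p.2 = y)).card : ℝ) ≤
        1 + (((h / r - N * y).divisors).card : ℝ) := by exact_mod_cast hle
    linarith
  rw [Finset.card_eq_sum_card_fiberwise (f := Prod.snd) (t := Finset.Icc 1 (N / r))
    (fun p hp => hmaps p hp), Nat.cast_sum]
  refine (Finset.sum_le_sum hfib).trans ?_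
  rw [Finset.sum_const, Nat.card_Icc, Nat.add_sub_cancel, nsmul_eq_mul]
  have hfl : ((N / r : ℕ) : ℝ) ≤ (N : ℝ) / r := Nat.cast_div_le
  calc ((N / r : ℕ) : ℝ) * ((1 + C) * ((h / r : ℕ) : ℝ) ^ ε)
      ≤ ((N : ℝ) / r) * ((1 + C) * ((h / r : ℕ) : ℝ) ^ ε) :=
        mul_le_mul_of_nonneg_right hfl (by positivity)
    _ = _ := by ring
end
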